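/- Let P ⊆ Φ_{B_n} be a signed poset, k a field, S = k[U_J : J ∈ J_conn(P)] a polynomial ring with one variable for each connected ideal of P, and φ : S → k[x_1^{±1},…,x_n^{±1}] the k-algebra homomorphism with φ(U_J) = x^{χ_J} = ∏_{i : i ∈ J} x_i · ∏_{i : −i ∈ J} x_i^{−1}. Then ker φ equals the ideal of S generated by the binomials syz(U_J, U_K) = U_J U_K − (∏_A U_A)(∏_B U_B), where {J, K} ranges over Π(P), A ranges over the connected components of the ideal J ∩ K, and B ranges over the connected components of the ideal supp±(χ_J + χ_K) (empty products equal 1). -/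

import Mathlib

open scoped Classical

noncomputable section

/-- Signed index set `±[n]`: `(true, i)` represents `+i`, `(false, i)` represents `-i`. -/
abbrev SIdx (n : ℕ) := Bool × Fin n

/-- Negation `a ↦ -a` on `±[n]`. -/
def negS {n : ℕ} (a : SIdx n) : SIdx n := (!a.1, a.2)

/-- Standard basis vector `e_i` of `ℝ^n`. -/
def stdB (n : ℕ) (i : Fin n) : Fin n → ℝ := Pi.single i 1

/-- `rsgn true = 1`, `rsgn false = -1`. -/
def rsgn (s : Bool) : ℝ := if s then 1 else -1

/-- `v(a)` for `a ∈ ±[n]`: `v(+i) = e_i`, `v(-i) = -e_i`. -/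
def vS {n : ℕ} (a : SIdx n) : Fin n → ℝ := rsgn a.1 • stdB n a.2

/-- `v` on `±[n] ∪ {0}` (with `none` playing the role of `0`). -/
def vO {n : ℕ} : Option (SIdx n) → (Fin n → ℝ)
  | none => 0
  | some a => vS a

/-- Negation on `±[n] ∪ {0}`, fixing `0`. -/
def negO {n : ℕ} : Option (SIdx n) → Option (SIdx n)
  | none => none
  | some a => some (negS a)

/-- Standard inner product on `ℝ^n`. -/
def dotR {n : ℕ} (x y : Fin n → ℝ) : ℝ := ∑ i, x i * y i

/-- The type `B_n` root system `Φ_{B_n}`. -/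
def BnRoots (n : ℕ) : Set (Fin n → ℝ) :=
  {α | (∃ i j : Fin n, i < j ∧ ∃ s t : Bool, α = rsgn s • stdB n i + rsgn t • stdB n j) ∨
    ∃ i : Fin n, ∃ s : Bool, α = rsgn s • stdB n i}

/-- The positive roots `Φ⁺_{B_n}`. -/
def BnPos (n : ℕ) : Set (Fin n → ℝ) :=
  {α | (∃ i j : Fin n, i < j ∧ ∃ t : Bool, α = stdB n i + rsgn t • stdB n j) ∨
    ∃ i : Fin n, α = stdB n i}

/-- The type `C_n` root system `Φ_{C_n}`. -/
def CnRoots (n : ℕ) : Set (Fin n → ℝ) :=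
  {α | (∃ i j : Fin n, i < j ∧ ∃ s t : Bool, α = rsgn s • stdB n i + rsgn t • stdB n j) ∨
    ∃ i : Fin n, ∃ s : Bool, α = (2 * rsgn s) • stdB n i}

/-- Nonnegative real linear combinations of elements of `S`. -/
def nnSpan {n : ℕ} (S : Set (Fin n → ℝ)) : Set (Fin n → ℝ) :=
  {x | ∃ (r : ℕ) (c : Fin r → ℝ) (β : Fin r → (Fin n → ℝ)),
    (∀ m, 0 ≤ c m) ∧ (∀ m, β m ∈ S) ∧ x = ∑ m, c m • β m}

/-- A signed poset: a subset of `Φ_{B_n}`, antisymmetric and closed under positive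
linear combinations remaining in `Φ_{B_n}`. -/
def IsSignedPoset (n : ℕ) (P : Set (Fin n → ℝ)) : Prop :=
  P ⊆ BnRoots n ∧ (∀ α ∈ P, -α ∉ P) ∧ ∀ α ∈ BnRoots n, α ∈ nnSpan P → α ∈ P

/-- A `C_n`-signed poset. -/
def IsCnSignedPoset (n : ℕ) (Q : Set (Fin n → ℝ)) : Prop :=
  Q ⊆ CnRoots n ∧ (∀ α ∈ Q, -α ∉ Q) ∧ ∀ α ∈ CnRoots n, α ∈ nnSpan Q → α ∈ Q

/-- The root cone `K^rt_P`. -/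
def rootCone {n : ℕ} (P : Set (Fin n → ℝ)) : Set (Fin n → ℝ) := nnSpan P

/-- The weight cone `K^wt_P`. -/
def weightCone {n : ℕ} (P : Set (Fin n → ℝ)) : Set (Fin n → ℝ) :=
  {f | ∀ α ∈ P, 0 ≤ dotR f α}

/-- The Fischer (strict) order on `±[n] ∪ {0}`:
`a < b` iff `v(a) - v(b) ∈ P`, or (`b = -a ≠ 0` and `v(a) ∈ P`). -/
def fLT {n : ℕ} (P : Set (Fin n → ℝ)) (a b : Option (SIdx n)) : Prop :=
  vO a - vO b ∈ P ∨ (a ≠ none ∧ b = negO a ∧ vO a ∈ P)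

/-- A subset of `±[n]` is isotropic if it contains no pair `{i, -i}`. -/
def Isotropic {n : ℕ} (J : Finset (SIdx n)) : Prop :=
  ∀ i : Fin n, ¬((true, i) ∈ J ∧ (false, i) ∈ J)

/-- Signed characteristic vector of a subset of `±[n]`. -/
def chiF {n : ℕ} (J : Finset (SIdx n)) : Fin n → ℝ := fun i =>
  if (true, i) ∈ J then 1 else if (false, i) ∈ J then -1 else 0

/-- `J` is an ideal of the signed poset `P`. -/
def IsIdeal {n : ℕ} (P : Set (Fin n → ℝ)) (J : Finset (SIdx n)) : Prop :=
  Isotropic J ∧ ∀ α ∈ P, 0 ≤ dotR (chiF J) α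

/-- Comparability in the Fischer order of `P`. -/
def fComp {n : ℕ} (P : Set (Fin n → ℝ)) (a b : SIdx n) : Prop :=
  fLT P (some a) (some b) ∨ fLT P (some b) (some a)

/-- One step in the comparability graph on a subset `J` of `±[n]`. -/
def connStep {n : ℕ} (P : Set (Fin n → ℝ)) (J : Finset (SIdx n)) (a b : SIdx n) : Prop :=
  a ∈ J ∧ b ∈ J ∧ fComp P a b

/-- `J` is connected: nonempty, and any two of its elements are joined by a path inside `J`
in the comparability graph of the Fischer order of `P`. -/
def IsConnectedIdl {n : ℕ} (P : Set (Fin n → ℝ)) (J : Finset (SIdx n)) : Prop :=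
  J.Nonempty ∧ ∀ a ∈ J, ∀ b ∈ J, Relation.ReflTransGen (connStep P J) a b

/-- A connected ideal of `P`. -/
def IsConnIdeal {n : ℕ} (P : Set (Fin n → ℝ)) (J : Finset (SIdx n)) : Prop :=
  IsIdeal P J ∧ IsConnectedIdl P J

/-- Support `supp J = {|a| : a ∈ J}`. -/
def suppF {n : ℕ} (J : Finset (SIdx n)) : Finset (Fin n) := J.image Prod.snd

/-- `J` and `K` intersect nontrivially. -/
def NontrivInter {n : ℕ} (J K : Finset (SIdx n)) : Prop :=
  (suppF J ∩ suppF K).Nonempty ∧ ¬J ⊆ K ∧ ¬K ⊆ J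

/-- `J` and `K` intersect trivially. -/
def TrivInter {n : ℕ} (J K : Finset (SIdx n)) : Prop := ¬NontrivInter J K

/-- A signed permutation, as an anti-symmetric bijection of `±[n]`. -/
def IsSPerm {n : ℕ} (w : SIdx n ≃ SIdx n) : Prop := ∀ a, w (negS a) = negS (w a)

/-- Linear action of a signed permutation on `ℝ^n`, determined by `w(e_i) = v(w(+i))`. -/
def spAct {n : ℕ} (w : SIdx n ≃ SIdx n) (x : Fin n → ℝ) : Fin n → ℝ :=
  ∑ i, x i • vS (w (true, i))

/-- `w` is a linear extension of `P`: a signed permutation with `P ⊆ w(Φ⁺_{B_n})`. -/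
def IsLinExt {n : ℕ} (P : Set (Fin n → ℝ)) (w : SIdx n ≃ SIdx n) : Prop :=
  IsSPerm w ∧ ∀ α ∈ P, ∃ β ∈ BnPos n, α = spAct w β

/-- The (finite) set `𝓛(P)` of linear extensions of `P`. -/
def linExts (n : ℕ) (P : Set (Fin n → ℝ)) : Finset (SIdx n ≃ SIdx n) :=
  Finset.univ.filter (IsLinExt P)

/-- Simple roots of `Φ_{B_n}`: `α_i = e_i - e_{i+1}` for `i < n - 1`, `α_{n-1} = e_{n-1}`
(0-indexed). -/
def simpleRoot (n : ℕ) (i : Fin n) : Fin n → ℝ := fun j =>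
  (if j = i then (1 : ℝ) else 0) - if (j : ℕ) = (i : ℕ) + 1 then 1 else 0

/-- `J^w_m = {w(1), …, w(m)}` (0-indexed: the images under `w` of `+1, …, +(m+1)`). -/
def JwSet {n : ℕ} (w : SIdx n ≃ SIdx n) (m : Fin n) : Finset (SIdx n) :=
  (Finset.univ.filter (fun j : Fin n => j ≤ m)).image (fun j => w (true, j))

/-- An extensible ideal of `P`. -/
def Extensible (n : ℕ) (P : Set (Fin n → ℝ)) (J : Finset (SIdx n)) : Prop :=
  ∃ I : Finset (SIdx n), I.Nonempty ∧ Disjoint I J ∧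
    IsIdeal P (J ∪ I) ∧ IsIdeal P (J ∪ I.image negS)

/-- The finite set `J_conn(P)` of connected ideals of `P`. -/
def JconnF (n : ℕ) (P : Set (Fin n → ℝ)) : Finset (Finset (SIdx n)) :=
  Finset.univ.filter (IsConnIdeal P)

/-- Membership in `Π(P)`: an unordered pair of nontrivially intersecting connected ideals. -/
def inPiP {n : ℕ} (P : Set (Fin n → ℝ)) (p : Sym2 (Finset (SIdx n))) : Prop :=
  ∃ J K : Finset (SIdx n),
    p = s(J, K) ∧ IsConnIdeal P J ∧ IsConnIdeal P K ∧ NontrivInter J K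

/-- The finite set `Π(P)` of unordered pairs of nontrivially intersecting connected ideals. -/
def PiP (n : ℕ) (P : Set (Fin n → ℝ)) : Finset (Sym2 (Finset (SIdx n))) :=
  Finset.univ.filter (inPiP P)

/-- No connected ideal of `P` intersects two or more other connected ideals nontrivially. -/
def NoDoubleNontriv (n : ℕ) (P : Set (Fin n → ℝ)) : Prop :=
  ∀ J K K' : Finset (SIdx n), IsConnIdeal P J → IsConnIdeal P K → IsConnIdeal P K' →
    NontrivInter J K → NontrivInter J K' → K = K'

/-- The connected component of `a` inside `J` (w.r.t. the Fischer comparability graph). -/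
def componentIn {n : ℕ} (P : Set (Fin n → ℝ)) (J : Finset (SIdx n)) (a : SIdx n) :
    Finset (SIdx n) :=
  J.filter (fun b => Relation.ReflTransGen (connStep P J) a b)

/-- The set of connected components of `J`. -/
def componentsOf {n : ℕ} (P : Set (Fin n → ℝ)) (J : Finset (SIdx n)) :
    Finset (Finset (SIdx n)) :=
  J.image (componentIn P J)

/-- The signed support `supp±(f) = {sgn(f_i)·i : f_i ≠ 0}` of a vector `f ∈ ℝ^n`. -/
def suppPM {n : ℕ} (f : Fin n → ℝ) : Finset (SIdx n) :=
  Finset.univ.filter (fun a : SIdx n => if a.1 then 0 < f a.2 else f a.2 < 0)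

/-- Index type for the variables `U_J`, `J` a connected ideal of `P`. -/
abbrev ConnIdx (n : ℕ) (P : Set (Fin n → ℝ)) := {J : Finset (SIdx n) // IsConnIdeal P J}

/-- Integer signed characteristic vector, as an exponent vector for Laurent monomials. -/
def chiZ {n : ℕ} (J : Finset (SIdx n)) : Fin n →₀ ℤ :=
  Finsupp.equivFunOnFinite.symm (fun i =>
    if (true, i) ∈ J then 1 else if (false, i) ∈ J then -1 else 0)

/-- The map `φ : k[U_J : J ∈ J_conn(P)] → k[x_1^{±1}, …, x_n^{±1}]`, `U_J ↦ x^{χ_J}`. -/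
def phiWt (n : ℕ) (P : Set (Fin n → ℝ)) (k : Type) [Field k] :
    MvPolynomial (ConnIdx n P) k →ₐ[k] AddMonoidAlgebra k (Fin n →₀ ℤ) :=
  MvPolynomial.aeval (fun J => AddMonoidAlgebra.single (chiZ J.val) 1)

/-- The binomial `syz(U_J, U_K) = U_J U_K - (∏_A U_A) (∏_B U_B)`, where `A` runs over the
connected components of `J ∩ K` and `B` over the connected components of `supp±(χ_J + χ_K)`. -/
def syzPoly (n : ℕ) (P : Set (Fin n → ℝ)) (k : Type) [Field k] (J K : ConnIdx n P) :
    MvPolynomial (ConnIdx n P) k :=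
  MvPolynomial.X J * MvPolynomial.X K -
    (∏ A ∈ Finset.univ.filter
        (fun A : ConnIdx n P => (A : Finset (SIdx n)) ∈ componentsOf P (J.val ∩ K.val)),
        MvPolynomial.X A) *
      ∏ B ∈ Finset.univ.filter
        (fun B : ConnIdx n P =>
          (B : Finset (SIdx n)) ∈ componentsOf P (suppPM (chiF J.val + chiF K.val))),
        MvPolynomial.X B

/-- `θ_1, …, θ_r` is a regular sequence: the ideal it generates is proper, and each `θ_{m+1}`
is a non-zero-divisor modulo the ideal generated by `θ_1, …, θ_m`. -/
def IsRegSeq {R : Type} [CommRing R] {r : ℕ} (θ : Fin r → R) : Prop :=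
  Ideal.span (Set.range θ) ≠ ⊤ ∧
    ∀ (m : ℕ) (hm : m < r) (x : R),
      θ ⟨m, hm⟩ * x ∈ Ideal.span (θ '' {j : Fin r | (j : ℕ) < m}) →
        x ∈ Ideal.span (θ '' {j : Fin r | (j : ℕ) < m})

/-- The induced signed poset `P_A = P ∩ span_ℝ{e_i : i ∈ A}`. -/
def inducedPoset (n : ℕ) (P : Set (Fin n → ℝ)) (A : Finset (Fin n)) : Set (Fin n → ℝ) :=
  {α | α ∈ P ∧ α ∈ Submodule.span ℝ (stdB n '' (A : Set (Fin n)))}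

/-- The major index of a signed permutation. -/
def majB {n : ℕ} (w : SIdx n ≃ SIdx n) : ℕ :=
  ∑ i ∈ Finset.univ.filter
      (fun i : Fin n => spAct w (simpleRoot n i) ∉ BnPos n), ((i : ℕ) + 1)

/-- `[m]_q = 1 + q + ⋯ + q^{m-1}` in `ℤ[q]`. -/
def qInt (m : ℕ) : Polynomial ℤ := ∑ t ∈ Finset.range m, Polynomial.X ^ t

/-- The symmetric function `{J, K} ↦ ⟨x, χ_J + χ_K⟩` on unordered pairs. -/
def pairDot {n : ℕ} (x : Fin n → ℝ) : Sym2 (Finset (SIdx n)) → ℝ :=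
  Sym2.lift ⟨fun J K => dotR x (chiF J + chiF K),
    fun J K => congrArg (dotR x) (add_comm (chiF J) (chiF K))⟩

/-- The symmetric function `{J, K} ↦ [|J| + |K|]_q` on unordered pairs. -/
def pairQ {n : ℕ} : Sym2 (Finset (SIdx n)) → Polynomial ℤ :=
  Sym2.lift ⟨fun J K => qInt (J.card + K.card),
    fun J K => congrArg qInt (Nat.add_comm J.card K.card)⟩

/-- The principal order ideal `I_≤(a)` in the Fischer order restricted to `±[n]`. -/
def Ile {n : ℕ} (P : Set (Fin n → ℝ)) (a : SIdx n) : Set (SIdx n) :=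
  {b | b = a ∨ fLT P (some b) (some a)}

/-- A set of signed indices is isotropic if it contains no pair `{i, -i}`. -/
def IsoSet {n : ℕ} (S : Set (SIdx n)) : Prop :=
  ∀ i : Fin n, ¬((true, i) ∈ S ∧ (false, i) ∈ S)

/-- A covering pair of the Fischer order of `P`. -/
def CovPair {n : ℕ} (P : Set (Fin n → ℝ)) (a b : Option (SIdx n)) : Prop :=
  fLT P a b ∧ ¬∃ c : Option (SIdx n), fLT P a c ∧ fLT P c b

/-- The set of covering roots of `P`. -/
def covRoots {n : ℕ} (P : Set (Fin n → ℝ)) : Set (Fin n → ℝ) :=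
  {x | ∃ a b : Option (SIdx n), CovPair P a b ∧ x = vO a - vO b}

/-- The set `J_ε = {i : ε_i = 1} ∪ {-i : ε_i = -1}` attached to a `{-1,0,1}`-vector. -/
def Jeps {n : ℕ} (ε : Fin n → ℝ) : Set (SIdx n) :=
  {a | (a.1 = true ∧ ε a.2 = 1) ∨ (a.1 = false ∧ ε a.2 = -1)}


namespace SPaux

variable {n : ℕ} {P : Set (Fin n → ℝ)}

theorem dot_two (x : Fin n → ℝ) (i j : Fin n) (s t : Bool) :
    dotR x (rsgn s • stdB n i + rsgn t • stdB n j) = rsgn s * x i + rsgn t * x j := by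
  simp only [dotR, stdB, Pi.add_apply, Pi.smul_apply, smul_eq_mul, mul_add, Finset.sum_add_distrib,
    Pi.single_apply]
  simp [mul_comm]

theorem dot_one (x : Fin n → ℝ) (i : Fin n) (s : Bool) :
    dotR x (rsgn s • stdB n i) = rsgn s * x i := by
  simp only [dotR, stdB, Pi.smul_apply, smul_eq_mul, Pi.single_apply]
  simp [mul_comm]

theorem chi_mem {J : Finset (SIdx n)} (hJ : Isotropic J) (s : Bool) (i : Fin n) :
    rsgn s * chiF J i = if (s, i) ∈ J then 1 else if (!s, i) ∈ J then -1 else 0 := by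
  have := hJ i
  cases s <;> simp only [rsgn, chiF, Bool.not_true, Bool.not_false] <;> grind

/-- Combinatorial form of being an ideal. -/
def CIdeal (P : Set (Fin n → ℝ)) (J : Finset (SIdx n)) : Prop :=
  (∀ s i, rsgn s • stdB n i ∈ P → (!s, i) ∉ J) ∧
  ∀ i j s t, i ≠ j → rsgn s • stdB n i + rsgn t • stdB n j ∈ P → (!s, i) ∈ J → (t, j) ∈ J

theorem ideal_iff (hP : P ⊆ BnRoots n) {J : Finset (SIdx n)} (hJ : Isotropic J) :
    IsIdeal P J ↔ CIdeal P J := by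
  constructor
  · rintro ⟨-, h⟩
    refine ⟨fun s i hi hm => ?_, fun i j s t hij hp hm => ?_⟩
    · have h1 := h _ hi
      rw [dot_one, chi_mem hJ] at h1
      have : (s, i) ∉ J := by have := hJ i; cases s <;> simp at hm ⊢ <;> tauto
      simp [this, hm] at h1
      linarith
    · have h1 := h _ hp
      rw [dot_two, chi_mem hJ, chi_mem hJ] at h1
      have : (s, i) ∉ J := by have := hJ i; cases s <;> simp at hm ⊢ <;> tauto
      simp only [this, hm, if_true, if_false] at h1
      by_contra hc
      simp only [hc, if_false] at h1
      split_ifs at h1 <;> linarith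
  · rintro ⟨h1, h2⟩
    refine ⟨hJ, fun α hα => ?_⟩
    rcases hP hα with ⟨i, j, hij, s, t, rfl⟩ | ⟨i, s, rfl⟩
    · rw [dot_two, chi_mem hJ, chi_mem hJ]
      have a1 := h2 i j s t hij.ne hα
      have a2 := h2 j i t s hij.ne' (by rwa [add_comm])
      split_ifs <;> simp_all
    · rw [dot_one, chi_mem hJ]
      have := h1 s i hα
      split_ifs <;> simp_all

theorem fLT_mem (hP : P ⊆ BnRoots n) {K : Finset (SIdx n)} (hK : IsIdeal P K) {a b : SIdx n}
    (hab : a.2 ≠ b.2) (h : fLT P (some a) (some b)) (hb : b ∈ K) : a ∈ K := by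
  rcases h with h | ⟨-, h, -⟩
  · have h2 := ((ideal_iff hP hK.1).1 hK).2 b.2 a.2 (!b.1) a.1 hab.symm ?_ (by simpa using hb)
    · exact h2
    · convert h using 1
      obtain ⟨s, i⟩ := a
      obtain ⟨t, j⟩ := b
      cases t <;> simp [vO, vS, rsgn] <;> abel
  · simp only [negO, Option.some.injEq] at h
    subst h
    exact absurd rfl hab

theorem inter_ideal (hP : P ⊆ BnRoots n) {J K : Finset (SIdx n)} (hJ : IsIdeal P J)
    (hK : IsIdeal P K) : IsIdeal P (J ∩ K) := by
  have hI : Isotropic (J ∩ K) := fun i h => hJ.1 i ⟨(Finset.mem_inter.1 h.1).1, (Finset.mem_inter.1 h.2).1⟩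
  rw [ideal_iff hP hI]
  have h1 := (ideal_iff hP hJ.1).1 hJ
  have h2 := (ideal_iff hP hK.1).1 hK
  refine ⟨fun s i hi hm => h1.1 s i hi (Finset.mem_inter.1 hm).1, fun i j s t hij hp hm => ?_⟩
  rw [Finset.mem_inter] at hm ⊢
  exact ⟨h1.2 i j s t hij hp hm.1, h2.2 i j s t hij hp hm.2⟩

theorem mem_suppPM (f : Fin n → ℝ) (s : Bool) (i : Fin n) :
    (s, i) ∈ suppPM f ↔ 0 < rsgn s * f i := by
  cases s <;> simp [suppPM, rsgn]

theorem supp_iso (f : Fin n → ℝ) : Isotropic (suppPM f) := by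
  rintro i ⟨h1, h2⟩
  rw [mem_suppPM] at h1 h2
  simp [rsgn] at h1 h2
  linarith

theorem rsgn_not (s : Bool) : rsgn (!s) = - rsgn s := by cases s <;> simp [rsgn]

theorem supp_ideal (hP : P ⊆ BnRoots n) {f : Fin n → ℝ} (hf : ∀ α ∈ P, 0 ≤ dotR f α) :
    IsIdeal P (suppPM f) := by
  rw [ideal_iff hP (supp_iso f)]
  refine ⟨fun s i hi hm => ?_, fun i j s t hij hp hm => ?_⟩
  · have := hf _ hi
    rw [dot_one] at this
    rw [mem_suppPM, rsgn_not] at hm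
    linarith
  · have := hf _ hp
    rw [dot_two] at this
    rw [mem_suppPM, rsgn_not] at hm
    rw [mem_suppPM]
    linarith

theorem supp_add_ideal (hP : P ⊆ BnRoots n) {J K : Finset (SIdx n)} (hJ : IsIdeal P J)
    (hK : IsIdeal P K) : IsIdeal P (suppPM (chiF J + chiF K)) := by
  apply supp_ideal hP
  intro α hα
  have h1 := hJ.2 α hα
  have h2 := hK.2 α hα
  have : dotR (chiF J + chiF K) α = dotR (chiF J) α + dotR (chiF K) α := by
    simp [dotR, add_mul, Finset.sum_add_distrib]
  linarith

/-! Components -/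

theorem step_symm (J : Finset (SIdx n)) {a b : SIdx n} (h : connStep P J a b) :
    connStep P J b a := ⟨h.2.1, h.1, h.2.2.symm⟩

theorem reach_symm {J : Finset (SIdx n)} {a b : SIdx n}
    (h : Relation.ReflTransGen (connStep P J) a b) : Relation.ReflTransGen (connStep P J) b a :=
  by
  induction h with
  | refl => exact .refl
  | tail _ hbc ih => exact .head (step_symm _ hbc) ih

theorem mem_comp {J : Finset (SIdx n)} {a b : SIdx n} :
    b ∈ componentIn P J a ↔ b ∈ J ∧ Relation.ReflTransGen (connStep P J) a b := by
  simp [componentIn]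

theorem comp_sub {J C : Finset (SIdx n)} (h : C ∈ componentsOf P J) : C ⊆ J := by
  obtain ⟨a, ha, rfl⟩ := Finset.mem_image.1 h
  exact Finset.filter_subset _ _

theorem comp_eq {J C : Finset (SIdx n)} (h : C ∈ componentsOf P J) {b : SIdx n} (hb : b ∈ C) :
    C = componentIn P J b := by
  obtain ⟨a, ha, rfl⟩ := Finset.mem_image.1 h
  have hab := (mem_comp.1 hb).2
  ext c
  rw [mem_comp, mem_comp]
  exact ⟨fun h => ⟨h.1, (reach_symm hab).trans h.2⟩, fun h => ⟨h.1, hab.trans h.2⟩⟩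

theorem comp_closed {J C : Finset (SIdx n)} (h : C ∈ componentsOf P J) {b c : SIdx n} (hb : b ∈ C)
    (hc : c ∈ J) (hbc : fComp P b c) : c ∈ C := by
  rw [comp_eq h hb, mem_comp]
  exact ⟨hc, .single ⟨comp_sub h hb, hc, hbc⟩⟩

theorem comp_iso {J C : Finset (SIdx n)} (hJ : Isotropic J) (hC : C ⊆ J) : Isotropic C :=
  fun i h => hJ i ⟨hC h.1, hC h.2⟩

theorem comp_conn (hP : P ⊆ BnRoots n) {J C : Finset (SIdx n)} (hJ : IsIdeal P J)
    (h : C ∈ componentsOf P J) : IsConnIdeal P C := by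
  have hI := comp_iso hJ.1 (comp_sub h)
  refine ⟨?_, ?_, ?_⟩
  · rw [ideal_iff hP hI]
    have h1 := (ideal_iff hP hJ.1).1 hJ
    refine ⟨fun s i hi hm => h1.1 s i hi (comp_sub h hm), fun i j s t hij hp hm => ?_⟩
    refine comp_closed h hm (h1.2 i j s t hij hp (comp_sub h hm)) (Or.inr (Or.inl ?_))
    convert hp using 1
    cases s <;> simp [vO, vS, rsgn] <;> abel
  · obtain ⟨a, ha, rfl⟩ := Finset.mem_image.1 h
    exact ⟨a, mem_comp.2 ⟨ha, .refl⟩⟩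
  · intro a ha b hb
    rw [comp_eq h ha] at hb
    have := (mem_comp.1 hb).2
    clear hb
    induction this with
    | refl => exact .refl
    | tail hac hcd ih =>
      have hc := comp_eq h ha ▸ mem_comp.2 ⟨hcd.1, hac⟩
      exact ih.tail ⟨hc, comp_closed h hc hcd.2.1 hcd.2.2, hcd.2.2⟩

/-- Connected components, as a set of indices of variables. -/
def comps (P : Set (Fin n → ℝ)) (D : Finset (SIdx n)) : Finset (ConnIdx n P) :=
  Finset.univ.filter (fun A : ConnIdx n P => (A : Finset (SIdx n)) ∈ componentsOf P D)

theorem mem_comps {D : Finset (SIdx n)} {A : ConnIdx n P} :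
    A ∈ comps P D ↔ A.val ∈ componentsOf P D := by simp [comps]

theorem sum_comps (hP : P ⊆ BnRoots n) {D : Finset (SIdx n)} (hD : IsIdeal P D)
    {M : Type*} [AddCommMonoid M] (h : SIdx n → M) :
    ∑ A ∈ comps P D, ∑ a ∈ A.val, h a = ∑ a ∈ D, h a := by
  rw [← Finset.sum_biUnion]
  · congr 1
    ext a
    simp only [Finset.mem_biUnion, mem_comps]
    constructor
    · rintro ⟨A, hA, ha⟩
      exact comp_sub hA ha
    · intro ha
      have hc : componentIn P D a ∈ componentsOf P D := Finset.mem_image_of_mem _ ha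
      exact ⟨⟨_, comp_conn hP hD hc⟩, hc, mem_comp.2 ⟨ha, .refl⟩⟩
  · intro A hA B hB hAB
    rw [Function.onFun, Finset.disjoint_left]
    intro a ha hb
    apply hAB
    apply Subtype.ext
    rw [comp_eq (mem_comps.1 hA) ha, comp_eq (mem_comps.1 hB) hb]

theorem conn_comps {S : ConnIdx n P} : comps P S.val = {S} := by
  ext A
  rw [mem_comps, Finset.mem_singleton]
  have key : ∀ a ∈ S.val, componentIn P S.val a = S.val := by
    intro a ha
    ext b
    rw [mem_comp]
    exact ⟨fun h => h.1, fun h => ⟨h, S.2.2.2 a ha b h⟩⟩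
  constructor
  · intro h
    obtain ⟨a, ha, h⟩ := Finset.mem_image.1 h
    exact Subtype.ext (by rw [← h, key a ha])
  · rintro rfl
    obtain ⟨a, ha⟩ := A.2.2.1
    exact Finset.mem_image.2 ⟨a, ha, key a ha⟩

/-- Integer sign vector. -/
def zS (a : SIdx n) : Fin n →₀ ℤ := Finsupp.single a.2 (if a.1 then 1 else -1)

theorem chiZ_eq {J : Finset (SIdx n)} (hJ : Isotropic J) : chiZ J = ∑ a ∈ J, zS a := by
  ext i
  rw [Finsupp.finsetSum_apply]
  rw [← Finset.sum_filter_add_sum_filter_not J (fun a => a.2 = i)]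
  rw [Finset.sum_eq_zero (s := J.filter (fun a => ¬ a.2 = i))]
  · have := hJ i
    simp only [chiZ, Finsupp.equivFunOnFinite_symm_apply_apply, add_zero]
    split_ifs with h1 h2
    · have : J.filter (fun a => a.2 = i) = {(true, i)} := by
        ext ⟨s, j⟩; cases s <;> simp <;> grind
      rw [this]; simp [zS]
    · have : J.filter (fun a => a.2 = i) = {(false, i)} := by
        ext ⟨s, j⟩; cases s <;> simp <;> grind
      rw [this]; simp [zS]
    · have : J.filter (fun a => a.2 = i) = ∅ := by
        ext ⟨s, j⟩; cases s <;> simp <;> grind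
      rw [this]; simp
  · intro a ha
    simp [zS, (Finset.mem_filter.1 ha).2]

theorem mem_S {J K : Finset (SIdx n)} (hJ : Isotropic J) (hK : Isotropic K) (a : SIdx n) :
    a ∈ suppPM (chiF J + chiF K) ↔ (a ∈ J ∨ a ∈ K) ∧ negS a ∉ J ∧ negS a ∉ K := by
  obtain ⟨s, i⟩ := a
  have h1 := hJ i
  have h2 := hK i
  rw [mem_suppPM, Pi.add_apply, mul_add, chi_mem hJ, chi_mem hK]
  have h3 : ¬ ((s, i) ∈ J ∧ (!s, i) ∈ J) := by cases s <;> simp <;> tauto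
  have h4 : ¬ ((s, i) ∈ K ∧ (!s, i) ∈ K) := by cases s <;> simp <;> tauto
  simp only [negS]
  split_ifs <;> norm_num <;> tauto

theorem chi_add {J K : Finset (SIdx n)} (hJ : Isotropic J) (hK : Isotropic K) :
    chiZ J + chiZ K = chiZ (J ∩ K) + chiZ (suppPM (chiF J + chiF K)) := by
  ext i
  have h1 := hJ i
  have h2 := hK i
  simp only [chiZ, Finsupp.add_apply, Finsupp.equivFunOnFinite_symm_apply_apply, mem_S hJ hK,
    Finset.mem_inter, negS, Bool.not_true, Bool.not_false]
  by_cases a1 : (true, i) ∈ J <;> by_cases a2 : (false, i) ∈ J <;>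
  by_cases a3 : (true, i) ∈ K <;> by_cases a4 : (false, i) ∈ K <;> simp_all

/-- Exponent map of `φ`. -/
def expF (P : Set (Fin n → ℝ)) : (ConnIdx n P →₀ ℕ) →ₗ[ℕ] (Fin n →₀ ℤ) :=
  Finsupp.linearCombination ℕ (fun J : ConnIdx n P => chiZ J.val)

/-- Standard monomials. -/
def Std (m : ConnIdx n P →₀ ℕ) : Prop :=
  ∀ J ∈ m.support, ∀ K ∈ m.support, ¬ NontrivInter J.val K.val

/-- Integer sign. -/
def zsgn (s : Bool) : ℤ := if s then 1 else -1

theorem zchi_mem {J : Finset (SIdx n)} (hJ : Isotropic J) (s : Bool) (i : Fin n) :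
    zsgn s * chiZ J i = if (s, i) ∈ J then 1 else if (!s, i) ∈ J then -1 else 0 := by
  have := hJ i
  cases s <;> simp only [zsgn, chiZ, Bool.not_true, Bool.not_false,
    Finsupp.equivFunOnFinite_symm_apply_apply] <;> grind

theorem expF_apply (m : ConnIdx n P →₀ ℕ) (s : Bool) (i : Fin n) :
    zsgn s * expF P m i = ∑ J ∈ m.support, (m J : ℤ) * (zsgn s * chiZ J.val i) := by
  rw [expF, Finsupp.linearCombination_apply, Finsupp.sum, Finsupp.finsetSum_apply, Finset.mul_sum]
  refine Finset.sum_congr rfl fun J _ => ?_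
  simp only [Finsupp.smul_apply, nsmul_eq_mul]
  ring

/-- Signed support of an integer vector. -/
def zsupp (g : Fin n →₀ ℤ) : Finset (SIdx n) :=
  Finset.univ.filter (fun a => 0 < zsgn a.1 * g a.2)

theorem mem_zsupp {g : Fin n →₀ ℤ} {a : SIdx n} : a ∈ zsupp g ↔ 0 < zsgn a.1 * g a.2 := by
  simp [zsupp]

theorem snd_mem_supp {J : Finset (SIdx n)} {a : SIdx n} (h : a ∈ J) : a.2 ∈ suppF J :=
  Finset.mem_image_of_mem _ h

theorem neg_notMem {J : Finset (SIdx n)} (hJ : Isotropic J) {s : Bool} {i : Fin n}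
    (h : (s, i) ∈ J) : (!s, i) ∉ J := by
  have := hJ i
  cases s <;> simp at h ⊢ <;> tauto

theorem std_sub {m : ConnIdx n P →₀ ℕ} (hm : Std m) {J K : ConnIdx n P} (hJ : J ∈ m.support)
    (hK : K ∈ m.support) {i : Fin n} (h1 : i ∈ suppF J.val) (h2 : i ∈ suppF K.val) :
    J.val ⊆ K.val ∨ K.val ⊆ J.val := by
  by_contra hc
  push Not at hc
  exact hm J hJ K hK ⟨⟨i, Finset.mem_inter.2 ⟨h1, h2⟩⟩, hc.1, hc.2⟩

theorem mem_zsupp_of {m : ConnIdx n P →₀ ℕ} (hm : Std m) {J : ConnIdx n P} (hJ : J ∈ m.support)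
    {a : SIdx n} (ha : a ∈ J.val) : a ∈ zsupp (expF P m) := by
  obtain ⟨s, i⟩ := a
  rw [mem_zsupp, expF_apply]
  apply Finset.sum_pos'
  · intro K hK
    apply mul_nonneg (by positivity)
    rw [zchi_mem K.2.1.1]
    have : (!s, i) ∉ K.val := by
      intro hc
      rcases std_sub hm hJ hK (i := i) (snd_mem_supp ha) (snd_mem_supp hc) with h | h
      · exact neg_notMem K.2.1.1 (h ha) hc
      · exact neg_notMem J.2.1.1 ha (h hc)
    simp only [this, if_false]
    split_ifs <;> simp
  · refine ⟨J, hJ, ?_⟩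
    rw [zchi_mem J.2.1.1]
    have := Finsupp.mem_support_iff.1 hJ
    simp only [ha, if_true]
    omega

theorem exists_of_mem_zsupp {m : ConnIdx n P →₀ ℕ} {a : SIdx n} (ha : a ∈ zsupp (expF P m)) :
    ∃ J ∈ m.support, a ∈ J.val := by
  obtain ⟨s, i⟩ := a
  rw [mem_zsupp, expF_apply] at ha
  obtain ⟨J, hJ, h⟩ : ∃ J ∈ m.support, 0 < (m J : ℤ) * (zsgn s * chiZ J.val i) := by
    by_contra hc
    push Not at hc
    exact absurd (Finset.sum_nonpos hc) (not_le.2 ha)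
  refine ⟨J, hJ, ?_⟩
  by_contra hc
  rw [zchi_mem J.2.1.1] at h
  simp only [hc, if_false] at h
  split_ifs at h <;> simp at h
  omega

theorem reach_mono {J S : Finset (SIdx n)} (h : J ⊆ S) {a b : SIdx n}
    (hab : Relation.ReflTransGen (connStep P J) a b) :
    Relation.ReflTransGen (connStep P S) a b := by
  induction hab with
  | refl => exact .refl
  | tail _ hx ih => exact ih.tail ⟨h hx.1, h hx.2.1, hx.2.2⟩

theorem std_comp (hP : P ⊆ BnRoots n) {m : ConnIdx n P →₀ ℕ} (hm : Std m) {a : SIdx n}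
    (ha : a ∈ zsupp (expF P m)) :
    ∃ J ∈ m.support, J.val = componentIn P (zsupp (expF P m)) a := by
  obtain ⟨J0, hJ0, ha0⟩ := exists_of_mem_zsupp ha
  obtain ⟨J, hJ, hmax⟩ := Finset.exists_max_image (m.support.filter (fun J => a ∈ J.val))
    (fun J => J.val.card) ⟨J0, Finset.mem_filter.2 ⟨hJ0, ha0⟩⟩
  obtain ⟨hJ, haJ⟩ := Finset.mem_filter.1 hJ
  refine ⟨J, hJ, ?_⟩
  ext b
  rw [mem_comp]
  constructor
  · intro hb
    refine ⟨mem_zsupp_of hm hJ hb, ?_⟩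
    exact reach_mono (fun x hx => mem_zsupp_of hm hJ hx) (J.2.2.2 a haJ b hb)
  · rintro ⟨-, h⟩
    induction h with
    | refl => exact haJ
    | @tail b c _ hbc ih =>
      obtain ⟨-, hc, hbc⟩ := hbc
      obtain ⟨K, hK, hcK⟩ := exists_of_mem_zsupp hc
      have hsub : J.val ⊆ K.val ∨ K.val ⊆ J.val := by
        by_contra hcon
        have hne : ∀ i, i ∈ suppF J.val → i ∉ suppF K.val := fun i h1 h2 =>
          hcon (std_sub hm hJ hK h1 h2)
        have hbc2 : b.2 ≠ c.2 := fun e => hne _ (snd_mem_supp ih) (e ▸ snd_mem_supp hcK)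
        rcases hbc with h | h
        · exact hne _ (snd_mem_supp ih) (snd_mem_supp (fLT_mem hP K.2.1 hbc2 h hcK))
        · exact hne _ (snd_mem_supp (fLT_mem hP J.2.1 hbc2.symm h ih)) (snd_mem_supp hcK)
      rcases hsub with h | h
      · have := Finset.eq_of_subset_of_card_le h (hmax K (Finset.mem_filter.2 ⟨hK, h haJ⟩))
        rwa [this]
      · exact h hcK

theorem split_one {m : ConnIdx n P →₀ ℕ} {J : ConnIdx n P} (hJ : J ∈ m.support) :
    ∃ r, m = r + Finsupp.single J 1 := by
  refine ⟨m - Finsupp.single J 1, ?_⟩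
  rw [tsub_add_cancel_of_le]
  rw [Finsupp.single_le_iff]
  have := Finsupp.mem_support_iff.1 hJ
  omega

theorem std_mono {r m : ConnIdx n P →₀ ℕ} (h : Std (r + m)) : Std r := by
  intro J hJ K hK
  apply h <;> simp_all

theorem std_uniq (hP : P ⊆ BnRoots n) (d : ℕ) : ∀ m m' : ConnIdx n P →₀ ℕ, m.degree = d →
    Std m → Std m' → expF P m = expF P m' → m = m' := by
  induction d with
  | zero =>
    intro m m' hd hm hm' h
    have h0 : m = 0 := (Finsupp.degree_eq_zero_iff m).1 hd
    subst h0
    by_contra hne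
    obtain ⟨J, hJ⟩ := Finsupp.support_nonempty_iff.2 (Ne.symm hne)
    obtain ⟨a, ha⟩ := J.2.2.1
    have := mem_zsupp_of hm' hJ ha
    rw [← h, mem_zsupp] at this
    simp at this
  | succ d ih =>
    intro m m' hd hm hm' h
    have hne : m ≠ 0 := by rintro rfl; simp at hd
    obtain ⟨J, hJ⟩ := Finsupp.support_nonempty_iff.2 hne
    obtain ⟨a, ha⟩ := J.2.2.1
    have ha := mem_zsupp_of hm hJ ha
    obtain ⟨J1, h1, e1⟩ := std_comp hP hm ha
    obtain ⟨J2, h2, e2⟩ := std_comp hP hm' (h ▸ ha)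
    rw [← h, ← e1] at e2
    have e3 := Subtype.ext e2
    subst e3
    obtain ⟨r, rfl⟩ := split_one h1
    obtain ⟨r', rfl⟩ := split_one h2
    rw [ih r r' (by simpa [map_add] using hd) (std_mono hm) (std_mono hm')
      (by simpa [map_add] using h)]

/-- Weight of a finite set, the termination measure. -/
def wt (J : Finset (SIdx n)) : ℕ :=
  J.card * (2 * 3 ^ Fintype.card (SIdx n) + 1) - 3 ^ J.card

theorem wt_add {J : Finset (SIdx n)} (hJ : J.Nonempty) :
    wt J + 3 ^ J.card = J.card * (2 * 3 ^ Fintype.card (SIdx n) + 1) := by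
  apply Nat.sub_add_cancel
  have h1 : 3 ^ J.card ≤ 3 ^ Fintype.card (SIdx n) :=
    Nat.pow_le_pow_right (by norm_num) (Finset.card_le_univ J)
  have h2 := Nat.mul_le_mul_right (2 * 3 ^ Fintype.card (SIdx n) + 1) hJ.card_pos
  omega

/-- Total weight of a monomial. -/
def totW (P : Set (Fin n → ℝ)) : (ConnIdx n P →₀ ℕ) →ₗ[ℕ] ℕ :=
  Finsupp.linearCombination ℕ (fun J : ConnIdx n P => wt J.val)

/-- Monomial of components. -/
def compM (P : Set (Fin n → ℝ)) (D : Finset (SIdx n)) : ConnIdx n P →₀ ℕ :=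
  ∑ A ∈ comps P D, Finsupp.single A 1

theorem expF_single (J : ConnIdx n P) : expF P (Finsupp.single J 1) = chiZ J.val := by
  simp [expF]

theorem totW_single (J : ConnIdx n P) : totW P (Finsupp.single J 1) = wt J.val := by
  simp [totW]

theorem expF_compM (hP : P ⊆ BnRoots n) {D : Finset (SIdx n)} (hD : IsIdeal P D) :
    expF P (compM P D) = chiZ D := by
  rw [compM, map_sum, chiZ_eq hD.1, ← sum_comps hP hD]
  refine Finset.sum_congr rfl fun A _ => ?_
  rw [expF_single, chiZ_eq A.2.1.1]

theorem totW_compM_le (hP : P ⊆ BnRoots n) {D : Finset (SIdx n)} (hD : IsIdeal P D) :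
    totW P (compM P D) ≤ D.card * (2 * 3 ^ Fintype.card (SIdx n) + 1) := by
  rw [compM, map_sum, Finset.card_eq_sum_ones, ← sum_comps hP hD, Finset.sum_mul]
  refine Finset.sum_le_sum fun A _ => ?_
  rw [totW_single, ← Finset.card_eq_sum_ones]
  exact Nat.sub_le _ _

theorem totW_lt (hP : P ⊆ BnRoots n) {J K : ConnIdx n P} (h : NontrivInter J.val K.val) :
    totW P (compM P (J.val ∩ K.val) + compM P (suppPM (chiF J.val + chiF K.val))) <
      wt J.val + wt K.val := by
  set S := suppPM (chiF J.val + chiF K.val) with hS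
  have hSmem := mem_S J.2.1.1 K.2.1.1
  have hSI : IsIdeal P S := supp_add_ideal hP J.2.1 K.2.1
  have hI := totW_compM_le hP (inter_ideal hP J.2.1 K.2.1)
  have hJ := wt_add J.2.2.1
  have hK := wt_add K.2.2.1
  have hcard := Finset.card_union_add_card_inter J.val K.val
  rw [map_add]
  by_cases hc : ∃ a ∈ J.val, negS a ∈ K.val
  · obtain ⟨a, ha, hb⟩ := hc
    have hlt : S.card < (J.val ∪ K.val).card := by
      apply Finset.card_lt_card
      refine ⟨fun x hx => Finset.mem_union.2 ((hSmem x).1 hx).1, fun hx => ?_⟩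
      exact ((hSmem a).1 (hx (Finset.mem_union_left _ ha))).2.2 hb
    have hS2 := totW_compM_le hP hSI
    have h1 : 3 ^ J.val.card ≤ 3 ^ Fintype.card (SIdx n) :=
      Nat.pow_le_pow_right (by norm_num) (Finset.card_le_univ _)
    have h2 : 3 ^ K.val.card ≤ 3 ^ Fintype.card (SIdx n) :=
      Nat.pow_le_pow_right (by norm_num) (Finset.card_le_univ _)
    generalize 3 ^ Fintype.card (SIdx n) = N at *
    have : (S.card + (J.val ∩ K.val).card + 1) * (2 * N + 1) ≤
      (J.val.card + K.val.card) * (2 * N + 1) := Nat.mul_le_mul_right _ (by omega)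
    linarith
  · push Not at hc
    have hc' : ∀ a ∈ K.val, negS a ∉ J.val := fun a ha hn => by
      have := hc _ hn
      simp [negS] at this
      exact this ha
    have hSe : S = J.val ∪ K.val := by
      ext a
      rw [hSmem, Finset.mem_union]
      refine ⟨fun h => h.1, fun h => ⟨h, ?_⟩⟩
      rcases h with h | h
      · exact ⟨neg_notMem J.2.1.1 h, hc a h⟩
      · exact ⟨hc' a h, neg_notMem K.2.1.1 h⟩
    obtain ⟨⟨i, hi⟩, hJK, hKJ⟩ := h
    have hx : ∃ x, x ∈ J.val ∧ x ∈ K.val := by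
      obtain ⟨h1, h2⟩ := Finset.mem_inter.1 hi
      obtain ⟨⟨s, j⟩, ha, rfl⟩ := Finset.mem_image.1 h1
      obtain ⟨⟨t, j'⟩, hb, e⟩ := Finset.mem_image.1 h2
      simp only at e
      subst e
      refine ⟨_, ha, ?_⟩
      have := hc _ ha
      cases s <;> cases t <;> simp_all [negS]
    obtain ⟨x, hxJ, hxK⟩ := hx
    have hJS : J.val ⊆ S := hSe ▸ Finset.subset_union_left
    have hKS : K.val ⊆ S := hSe ▸ Finset.subset_union_right
    have hreach : ∀ a ∈ S, Relation.ReflTransGen (connStep P S) x a := by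
      intro a ha
      rw [hSe, Finset.mem_union] at ha
      rcases ha with ha | ha
      · exact reach_mono hJS (J.2.2.2 x hxJ a ha)
      · exact reach_mono hKS (K.2.2.2 x hxK a ha)
    have hSC : IsConnIdeal P S := ⟨hSI, ⟨x, hJS hxJ⟩, fun a ha b hb =>
      (reach_symm (hreach a ha)).trans (hreach b hb)⟩
    have hWS : totW P (compM P S) = wt S := by
      have := conn_comps (S := (⟨S, hSC⟩ : ConnIdx n P))
      simp only at this
      rw [compM, this, Finset.sum_singleton, totW_single]
    have hW := wt_add hSC.2.1
    have c1 : J.val.card < S.card := Finset.card_lt_card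
      ⟨hJS, fun hh => hKJ (hKS.trans hh)⟩
    have c2 : K.val.card < S.card := Finset.card_lt_card
      ⟨hKS, fun hh => hJK (hJS.trans hh)⟩
    obtain ⟨q, hq⟩ : ∃ q, S.card = q + 1 := ⟨S.card - 1, by omega⟩
    have p1 : 3 ^ J.val.card ≤ 3 ^ q := Nat.pow_le_pow_right (by norm_num) (by omega)
    have p2 : 3 ^ K.val.card ≤ 3 ^ q := Nat.pow_le_pow_right (by norm_num) (by omega)
    have p3 : 3 ^ S.card = 3 * 3 ^ q := by rw [hq]; ring
    have p4 : 0 < 3 ^ q := by positivity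
    have : (S.card + (J.val ∩ K.val).card) * (2 * 3 ^ Fintype.card (SIdx n) + 1) =
      (J.val.card + K.val.card) * (2 * 3 ^ Fintype.card (SIdx n) + 1) := by
      rw [hSe, hcard]
    rw [hWS]
    linarith

variable {k : Type} [Field k]

theorem syz_eq (J K : ConnIdx n P) : syzPoly n P k J K =
    MvPolynomial.monomial (Finsupp.single J 1 + Finsupp.single K 1) 1 -
    MvPolynomial.monomial
      (compM P (J.val ∩ K.val) + compM P (suppPM (chiF J.val + chiF K.val))) 1 := by
  have key : ∀ D, MvPolynomial.monomial (compM P D) (1 : k) =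
      ∏ A ∈ comps P D, MvPolynomial.X A := by
    intro D
    rw [compM, MvPolynomial.monomial_sum_one]
    rfl
  have mm : ∀ a b : ConnIdx n P →₀ ℕ, MvPolynomial.monomial (a + b) (1 : k) =
    MvPolynomial.monomial a 1 * MvPolynomial.monomial b 1 := by
    intro a b; simp [MvPolynomial.monomial_mul]
  rw [mm, mm, key, key]
  rfl

theorem phi_monomial (m : ConnIdx n P →₀ ℕ) (c : k) :
    phiWt n P k (MvPolynomial.monomial m c) = AddMonoidAlgebra.single (expF P m) c := by
  rw [phiWt, MvPolynomial.aeval_monomial]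
  have : (m.prod fun (i : ConnIdx n P) e => (AddMonoidAlgebra.single (chiZ i.val) (1 : k)) ^ e) =
      AddMonoidAlgebra.single (expF P m) 1 := by
    induction m using Finsupp.induction_linear with
    | zero => simp [AddMonoidAlgebra.one_def]
    | add f g hf hg =>
      rw [Finsupp.prod_add_index' (by simp) (by intros; rw [pow_add]), hf, hg,
        AddMonoidAlgebra.single_mul_single, map_add, one_mul]
    | single a b =>
      simp [expF, AddMonoidAlgebra.single_pow]
  rw [this]
  simp [AddMonoidAlgebra.single_mul_single]

theorem exp_pair (hP : P ⊆ BnRoots n) (J K : ConnIdx n P) :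
    expF P (compM P (J.val ∩ K.val) + compM P (suppPM (chiF J.val + chiF K.val))) =
      expF P (Finsupp.single J 1 + Finsupp.single K 1) := by
  rw [map_add, map_add, expF_single, expF_single, expF_compM hP (inter_ideal hP J.2.1 K.2.1),
    expF_compM hP (supp_add_ideal hP J.2.1 K.2.1), chi_add J.2.1.1 K.2.1.1]

/-- The ideal of syzygies. -/
def syzI (n : ℕ) (P : Set (Fin n → ℝ)) (k : Type) [Field k] : Ideal (MvPolynomial (ConnIdx n P) k) :=
  Ideal.span {f | ∃ J K : ConnIdx n P, NontrivInter J.val K.val ∧ f = syzPoly n P k J K}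

theorem exists_std (hP : P ⊆ BnRoots n) (d : ℕ) : ∀ m : ConnIdx n P →₀ ℕ, totW P m = d →
    ∃ s, Std s ∧ expF P s = expF P m ∧
      MvPolynomial.monomial m (1 : k) - MvPolynomial.monomial s 1 ∈ syzI n P k := by
  induction d using Nat.strong_induction_on with
  | _ d ih =>
  intro m hd
  by_cases hm : Std m
  · exact ⟨m, hm, rfl, by simp⟩
  · unfold Std at hm
    push Not at hm
    obtain ⟨J, hJ, K, hK, h⟩ := hm
    have hne : J ≠ K := by rintro rfl; exact h.2.1 subset_rfl
    obtain ⟨r0, rfl⟩ := split_one hJ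
    have hK' : K ∈ r0.support := by
      simpa [Finsupp.single_apply, hne] using hK
    obtain ⟨r, rfl⟩ := split_one hK'
    have hlt := totW_lt hP h
    have hex := exp_pair hP J K
    have hsyz : syzPoly n P k J K ∈ syzI n P k := Ideal.subset_span ⟨J, K, h, rfl⟩
    rw [syz_eq] at hsyz
    set q := compM P (J.val ∩ K.val) + compM P (suppPM (chiF J.val + chiF K.val)) with hq
    obtain ⟨s, h1, h2, h3⟩ := ih (totW P (r + q)) (by
      rw [← hd]
      simp only [map_add, totW_single] at hlt ⊢
      omega) (r + q) rfl
    refine ⟨s, h1, ?_, ?_⟩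
    · rw [h2, map_add, hex]
      simp only [map_add]
      abel
    · have h4 := (syzI n P k).mul_mem_left (MvPolynomial.monomial r 1) hsyz
      rw [mul_sub, MvPolynomial.monomial_mul, MvPolynomial.monomial_mul, one_mul] at h4
      have h5 := (syzI n P k).add_mem h4 h3
      rw [sub_add_sub_cancel] at h5
      convert h5 using 3
      abel

theorem congr_of_exp (hP : P ⊆ BnRoots n) {m m' : ConnIdx n P →₀ ℕ} (h : expF P m = expF P m') :
    MvPolynomial.monomial m (1 : k) - MvPolynomial.monomial m' 1 ∈ syzI n P k := by
  obtain ⟨s, h1, h2, h3⟩ := exists_std (k := k) hP _ m rfl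
  obtain ⟨s', h1', h2', h3'⟩ := exists_std (k := k) hP _ m' rfl
  have := std_uniq hP _ s s' rfl h1 h1' (by rw [h2, h2', h])
  subst this
  have := (syzI n P k).sub_mem h3 h3'
  rwa [sub_sub_sub_cancel_right] at this

theorem ker_le (hP : P ⊆ BnRoots n) : RingHom.ker (phiWt n P k) ≤ syzI n P k := by
  classical
  let sec : (Fin n →₀ ℤ) → (ConnIdx n P →₀ ℕ) := fun g =>
    if h : ∃ m, expF P m = g then h.choose else 0
  have hsec : ∀ m, expF P (sec (expF P m)) = expF P m := by
    intro m
    have h : ∃ m', expF P m' = expF P m := ⟨m, rfl⟩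
    simp only [sec, dif_pos h]
    exact h.choose_spec
  let ψ : AddMonoidAlgebra k (Fin n →₀ ℤ) → MvPolynomial (ConnIdx n P) k :=
    fun x => AddMonoidAlgebra.mapDomain sec x
  have ψ0 : ψ 0 = 0 := AddMonoidAlgebra.mapDomain_zero _
  have ψadd : ∀ x y, ψ (x + y) = ψ x + ψ y := AddMonoidAlgebra.mapDomain_add _
  have ψs : ∀ g c, ψ (AddMonoidAlgebra.single g c) = MvPolynomial.monomial (sec g) c :=
    fun g c => AddMonoidAlgebra.mapDomain_single
  have key : ∀ p : MvPolynomial (ConnIdx n P) k, p - ψ (phiWt n P k p) ∈ syzI n P k := by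
    intro p
    induction p using MvPolynomial.induction_on' with
    | monomial m c =>
      rw [phi_monomial, ψs]
      have h := (syzI n P k).mul_mem_left (MvPolynomial.C c) (congr_of_exp hP (hsec m).symm)
      rwa [mul_sub, MvPolynomial.C_mul_monomial, MvPolynomial.C_mul_monomial, mul_one] at h
    | add p q hp hq =>
      rw [map_add, ψadd, add_sub_add_comm]
      exact (syzI n P k).add_mem hp hq
  intro p hp
  have h := key p
  rw [RingHom.mem_ker] at hp
  rw [hp, ψ0, sub_zero] at h
  exact h

theorem le_ker (hP : P ⊆ BnRoots n) : syzI n P k ≤ RingHom.ker (phiWt n P k) := by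
  apply Ideal.span_le.2
  rintro f ⟨J, K, -, rfl⟩
  rw [SetLike.mem_coe, RingHom.mem_ker, syz_eq, map_sub, phi_monomial, phi_monomial,
    exp_pair hP, sub_self]

end SPaux

theorem statement_1 (n : ℕ) (hn : 1 ≤ n) (P : Set (Fin n → ℝ)) (hP : IsSignedPoset n P)
    (k : Type) [Field k] :
    RingHom.ker (phiWt n P k) =
      Ideal.span {f | ∃ J K : ConnIdx n P, NontrivInter J.val K.val ∧ f = syzPoly n P k J K} := by
  exact le_antisymm (SPaux.ker_le hP.1) (SPaux.le_ker hP.1)
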